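/- Let q be an odd prime power (q = p^e, p odd prime), ℓ > 2, 0 < d < 2ℓ with gcd(ℓ,d) = 1 and ℓ + d odd, β a nonsquare of F_{q^{2ℓ}}, ω ∈ F_{q^{2ℓ}}^* with ω^{q^ℓ} = −ω, and let B = (F_{q^{2ℓ}}, +, ⋆) be the Budaghyan–Helleseth presemifield with x⋆y = x·y^{q^ℓ} + x^{q^ℓ}·y + (β·(x·y^{q^d} + x^{q^d}·y) + β^{q^ℓ}·(x·y^{q^d} + x^{q^d}·y)^{q^ℓ})·ω. Then: (a) for every Dickson semifield D = (F_{Q^k} × F_{Q^k}, +, ⋆_D) with Q an odd prime power, k > 1 odd, j a nonsquare of F_{Q^k}, σ a nontrivial F_Q-automorphism of F_{Q^k}, multiplication (a,b) ⋆_D (c,d) = (a·c + j·b^σ·d^σ, a·d + b·c), and Q^{2k} = q^{2ℓ}, there is no isotopism between B and D (no triple of additive bijections g1,g2,g3 : F_{q^{2ℓ}} → F_{Q^k} × F_{Q^k} with g1(x) ⋆_D g2(y) = g3(x⋆y) for all x,y); (b) for every generalized twisted field T = (F_{Q^t}, +, ⋆_A) with Q an odd prime power, t > 1, multiplication x ⋆_A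 y = x^α·y + x·y^α where α : x ↦ x^{Q^{n'}} is an automorphism of F_{Q^t} whose fixed field is F_Q, α ≠ id, t/gcd(t,n') odd, and Q^t = q^{2ℓ}, there is no isotopism between B and T. -/

import Mathlib

/-- The multiplication `x ⋆ y` of the Budaghyan–Helleseth presemifield
`BH(q,ℓ,d,β)` on `F_{q^{2ℓ}}` (realized as `GaloisField p (e * (2ℓ))`, `q = p^e`). -/
noncomputable def bhMul (p e ℓ d q : ℕ) [Fact p.Prime]
    (β ω : GaloisField p (e * (2 * ℓ))) (x y : GaloisField p (e * (2 * ℓ))) :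
    GaloisField p (e * (2 * ℓ)) :=
  x * y ^ q ^ ℓ + x ^ q ^ ℓ * y +
    (β * (x * y ^ q ^ d + x ^ q ^ d * y) +
        β ^ q ^ ℓ * (x * y ^ q ^ d + x ^ q ^ d * y) ^ q ^ ℓ) * ω

/-- The multiplication of a Dickson semifield on `F_{Q^k} × F_{Q^k}`:
`(a,b) ⋆_D (c,d) = (a·c + j·σ(b)·σ(d), a·d + b·c)`. -/
noncomputable def dicksonMul {p2 e2 k : ℕ} [Fact p2.Prime]
    (j : GaloisField p2 (e2 * k))
    (σ : GaloisField p2 (e2 * k) ≃+* GaloisField p2 (e2 * k))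
    (a c : GaloisField p2 (e2 * k) × GaloisField p2 (e2 * k)) :
    GaloisField p2 (e2 * k) × GaloisField p2 (e2 * k) :=
  (a.1 * c.1 + j * σ a.2 * σ c.2, a.1 * c.2 + a.2 * c.1)

/-- The multiplication of a generalized twisted field on `F_{Q^t}`,
with `α : x ↦ x^{Q^{n'}}`: `x ⋆_A y = x^α·y + x·y^α`. -/
noncomputable def twistedMul {p2 e2 t : ℕ} [Fact p2.Prime] (n' : ℕ)
    (x y : GaloisField p2 (e2 * t)) : GaloisField p2 (e2 * t) :=
  x ^ (p2 ^ e2) ^ n' * y + x * y ^ (p2 ^ e2) ^ n'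

/-!
The nuclei of a presemifield, seen as sets of self-maps, are conjugated by any isotopism, so it
suffices to tell the three families apart by their nuclei. Let `κ` and `τ` be the `q ^ ℓ`- and
`q ^ d`-power maps. Comparing coefficients in the pairwise distinct characters `1`, `κ`, `τ`, `κτ`
shows that the middle nucleus of the Budaghyan–Helleseth presemifield consists of maps
`x ↦ a * x + b * κ x`, where `a` and `b` each run through a space of dimension at most one over the
fixed field of `κτ`. This is too small for a Dickson semifield, whose middle nucleus contains all
scalars of a field of order `q ^ ℓ`. Moreover one of the maps `x ↦ b * κ x` with `b ≠ 0` does occur,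
and it is not in the left nucleus, whereas in a generalized twisted field the middle nucleus lies in
the left nucleus.
-/

open Function

section Isotopism

variable {M N : Type*}

/-- Isotopy of two multiplications on additive structures. -/
def Isotopic [Add M] [Add N] (m : M → M → M) (m' : N → N → N) : Prop :=
  ∃ g₁ g₂ g₃ : M ≃+ N, ∀ x y, m' (g₁ x) (g₂ y) = g₃ (m x y)

/-- The middle nucleus of a multiplication, in the form that makes sense without an identity: a set
of self-maps rather than of elements. For a presemifield the maps `A` and `B` are automatically
additive. -/
def middleNucleus (m : M → M → M) : Set (M → M) :=
  {A | ∃ B : M → M, ∀ x y, m (A x) y = m x (B y)}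

/-- The left nucleus of a multiplication, as a set of self-maps. For a presemifield, additivity of
`C` forces that of `A`. -/
def leftNucleus [AddZeroClass M] (m : M → M → M) : Set (M → M) :=
  {A | ∃ C : M →+ M, ∀ x y, m (A x) y = C (m x y)}

lemma Isotopic.symm [Add M] [Add N] {m : M → M → M} {m' : N → N → N} (h : Isotopic m m') :
    Isotopic m' m := by
  obtain ⟨g₁, g₂, g₃, h⟩ := h
  refine ⟨g₁.symm, g₂.symm, g₃.symm, fun x y => g₃.injective ?_⟩
  rw [← h]
  simp

lemma conj_mem_middleNucleus [Add M] [Add N] {m : M → M → M} {m' : N → N → N} {g₁ g₂ g₃ : M ≃+ N}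
    (h : ∀ x y, m' (g₁ x) (g₂ y) = g₃ (m x y)) {A : M → M} (hA : A ∈ middleNucleus m) :
    g₁ ∘ A ∘ g₁.symm ∈ middleNucleus m' := by
  obtain ⟨B, hB⟩ := hA
  refine ⟨g₂ ∘ B ∘ g₂.symm, fun x y => ?_⟩
  have hl := h (A (g₁.symm x)) (g₂.symm y)
  have hr := h (g₁.symm x) (B (g₂.symm y))
  rw [g₂.apply_symm_apply] at hl
  rw [g₁.apply_symm_apply] at hr
  simp only [comp_apply, hl, hr, hB]

lemma Isotopic.encard_middleNucleus_le [Add M] [Add N] {m : M → M → M} {m' : N → N → N}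
    (h : Isotopic m m') : (middleNucleus m).encard ≤ (middleNucleus m').encard := by
  obtain ⟨g₁, g₂, g₃, h⟩ := h
  refine Set.encard_le_encard_of_injOn (fun A hA => conj_mem_middleNucleus h hA) ?_
  exact (g₁.toEquiv.conj.injective).injOn

lemma Isotopic.middleNucleus_subset_leftNucleus [AddZeroClass M] [AddZeroClass N]
    {m : M → M → M} {m' : N → N → N} (h : Isotopic m m')
    (hsub : middleNucleus m' ⊆ leftNucleus m') : middleNucleus m ⊆ leftNucleus m := by
  obtain ⟨g₁, g₂, g₃, h⟩ := h
  intro A hA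
  obtain ⟨C, hC⟩ := hsub (conj_mem_middleNucleus h hA)
  refine ⟨g₃.symm.toAddMonoidHom.comp (C.comp g₃.toAddMonoidHom), fun x y => g₃.injective ?_⟩
  have hxy := hC (g₁ x) (g₂ y)
  simp only [comp_apply, AddEquiv.symm_apply_apply, h] at hxy
  simpa using hxy

end Isotopism

section Dedekind

variable {ι F M K : Type*} [Fintype ι] [MulOneClass M] [CommRing K] [IsDomain K] [FunLike F M K]
  [MonoidHomClass F M K]

lemma coeff_eq_zero_of_sum_mul_monoidHom {f : ι → F} (hf : Injective f) {c : ι → K}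
    (h : ∀ x, ∑ i, c i * f i x = 0) (i : ι) : c i = 0 := by
  have hinj : Injective fun i => (f i : M →* K) := fun i j hij =>
    hf (DFunLike.ext _ _ fun x => DFunLike.congr_fun hij x)
  refine Fintype.linearIndependent_iff.mp ((linearIndependent_monoidHom M K).comp _ hinj) c ?_ i
  funext x
  simpa using h x

lemma coeff_eq_zero_of_sum_mul_monoidHom₂ {f : ι → F} (hf : Injective f) {c : ι → ι → K}
    (h : ∀ x y, ∑ i, ∑ j, c i j * f i x * f j y = 0) (i j : ι) : c i j = 0 := by
  refine coeff_eq_zero_of_sum_mul_monoidHom hf (fun y => ?_) j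
  refine coeff_eq_zero_of_sum_mul_monoidHom hf (c := fun i => ∑ j, c i j * f j y) (fun x => ?_) i
  rw [← h x y]
  refine Finset.sum_congr rfl fun i _ => ?_
  rw [Finset.sum_mul]
  exact Finset.sum_congr rfl fun j _ => mul_right_comm _ _ _

end Dedekind

section TwistedField

/-- The multiplication of the generalized twisted field attached to an endomorphism `α`. -/
def twistedProd {R : Type*} [Semiring R] (α : R →+* R) (x y : R) : R :=
  α x * y + x * α y

lemma twistedProd_comm {R : Type*} [CommSemiring R] (α : R →+* R) (x y : R) :
    twistedProd α x y = twistedProd α y x := by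
  simp only [twistedProd]
  ring

variable {K : Type*} [Field K] {α : K →+* K}

lemma exists_eq_of_twistedProd_eq (hα : α ≠ 1) {A B : K → K}
    (h : ∀ x y, twistedProd α (A x) y = twistedProd α x (B y)) :
    ∃ m n, ∀ x, A x = m * α x + n * x := by
  obtain ⟨c, hc : α c ≠ c⟩ := DFunLike.ne_iff.mp hα
  have hc' : α c - c ≠ 0 := sub_ne_zero.mpr hc
  refine ⟨(B c - c * B 1) / (α c - c), (α (B c) - c * α (B 1)) / (α c - c), fun x => ?_⟩
  -- The cases `y = 1` and `y = c` form a linear system for `α (A x)` and `A x`.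
  have h1 := h x 1
  have h2 := h x c
  simp only [twistedProd, map_one] at h1 h2
  field_simp
  linear_combination h2 - c * h1

lemma exists_eq_of_twistedProd_eq_right (hα : α ≠ 1) {A B : K → K}
    (h : ∀ x y, twistedProd α (A x) y = twistedProd α x (B y)) :
    ∃ m n, ∀ x, B x = m * α x + n * x :=
  exists_eq_of_twistedProd_eq hα (B := A) fun x y => by
    rw [twistedProd_comm, ← h, twistedProd_comm]

lemma exists_eq_mul_of_mem_middleNucleus_twistedProd (hα : α ≠ 1)
    (hfix : ∀ x, α (α x) = x → α x = x) {A : K → K} (hA : A ∈ middleNucleus (twistedProd α)) :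
    ∃ n, α n = n ∧ ∀ x, A x = n * x := by
  obtain ⟨B, hB⟩ := hA
  obtain ⟨m, n, hA⟩ := exists_eq_of_twistedProd_eq hα hB
  obtain ⟨m', n', hB'⟩ := exists_eq_of_twistedProd_eq_right hα hB
  obtain ⟨c, hc : α c ≠ c⟩ := DFunLike.ne_iff.mp hα
  have h1 : α * α ≠ 1 := fun h => hc (hfix c (DFunLike.congr_fun h c))
  have h2 : α * α ≠ α := fun h => hc (α.injective (DFunLike.congr_fun h c))
  have hinj : Injective ![1, α, α * α] := by
    rw [← List.nodup_ofFn]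
    simp [hα.symm, h1.symm, h2.symm]
  have hcoeff := coeff_eq_zero_of_sum_mul_monoidHom₂ hinj
    (c := ![![0, n - α n', -α m'], ![α n - n', m - m', 0], ![α m, 0, 0]]) (fun x y => by
      have := hB x y
      simp only [twistedProd, hA, hB', map_add, map_mul] at this
      simp only [Fin.sum_univ_three, Matrix.cons_val, RingHom.coe_one, id_eq, RingHom.coe_mul,
        comp_apply]
      linear_combination this)
  have hm : m = 0 := by simpa using hcoeff 2 0
  have hn : n = α n' := sub_eq_zero.mp (hcoeff 0 1)
  have hn' : α n = n' := sub_eq_zero.mp (hcoeff 1 0)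
  exact ⟨n, hfix n (by rw [hn', ← hn]), fun x => by simp [hA, hm]⟩

lemma middleNucleus_twistedProd_subset_leftNucleus (hα : α ≠ 1)
    (hfix : ∀ x, α (α x) = x → α x = x) :
    middleNucleus (twistedProd α) ⊆ leftNucleus (twistedProd α) := by
  intro A hA
  obtain ⟨n, hn, hA⟩ := exists_eq_mul_of_mem_middleNucleus_twistedProd hα hfix hA
  refine ⟨AddMonoidHom.mulLeft n, fun x y => ?_⟩
  simp only [twistedProd, hA, map_mul, hn, AddMonoidHom.coe_mulLeft]
  ring

end TwistedField

section Dickson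

variable {F : Type*} [CommSemiring F]

/-- The multiplication of a Dickson semifield, for an arbitrary commutative semiring of scalars and
an arbitrary multiplicative twist `σ`. -/
def dicksonProd (j : F) (σ : F →* F) (a c : F × F) : F × F :=
  (a.1 * c.1 + j * σ a.2 * σ c.2, a.1 * c.2 + a.2 * c.1)

lemma smul_mem_middleNucleus_dicksonProd (j : F) (σ : F →* F) (l : F) :
    (fun x => l • x) ∈ middleNucleus (dicksonProd j σ) := by
  refine ⟨fun x => l • x, fun a c => Prod.ext ?_ ?_⟩
  · simp only [dicksonProd, Prod.smul_fst, Prod.smul_snd, smul_eq_mul, map_mul]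
    ring
  · simp only [dicksonProd, Prod.smul_fst, Prod.smul_snd, smul_eq_mul]
    ring

lemma card_le_encard_middleNucleus_dicksonProd (j : F) (σ : F →* F) :
    ENat.card F ≤ (middleNucleus (dicksonProd j σ)).encard := by
  have hinj : Injective fun (l : F) (x : F × F) => l • x := fun l l' h => by
    simpa using congrArg Prod.fst (congrFun h (1, 0))
  exact hinj.encard_range.trans
    (Set.encard_le_encard (Set.range_subset_iff.mpr (smul_mem_middleNucleus_dicksonProd j σ)))

end Dickson

section DualFamily

variable {K : Type*} [Field K] [Finite K]

lemma exists_forall_ringHom_eq_of_apply_eq (R : Type*) [Semiring R] :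
    ∃ θ : K, ∀ g h : K →+* R, g θ = h θ → g = h := by
  obtain ⟨θ, hθ⟩ := IsCyclic.exists_generator (α := Kˣ)
  refine ⟨θ, fun g h hgh => RingHom.ext fun x => ?_⟩
  rcases eq_or_ne x 0 with rfl | hx
  · rw [map_zero, map_zero]
  · obtain ⟨k, hk⟩ := mem_powers_iff_mem_zpowers.mpr (hθ (Units.mk0 x hx))
    have hx : x = (θ : K) ^ k := by simpa using congrArg Units.val hk.symm
    rw [hx, map_pow, map_pow, hgh]

open Classical in
lemma exists_sum_ringHom_mul_ringHom_eq_ite : ∃ (s : Finset ℕ) (u v : ℕ → K),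
    ∀ g h : K →+* K, ∑ i ∈ s, g (u i) * h (v i) = if g = h then 1 else 0 := by
  have := Fintype.ofFinite K
  obtain ⟨θ, hθ⟩ := exists_forall_ringHom_eq_of_apply_eq (K := K) K
  -- The indicator polynomial of `θ`; its image under `g` is the indicator polynomial of `g θ`.
  let P : Polynomial K := 1 - (Polynomial.X - Polynomial.C θ) ^ (Fintype.card K - 1)
  refine ⟨P.support, P.coeff, fun i => θ ^ i, fun g h => ?_⟩
  have hcard : Fintype.card K - 1 ≠ 0 := Nat.sub_ne_zero_of_lt Fintype.one_lt_card
  have hsum : ∑ i ∈ P.support, g (P.coeff i) * h (θ ^ i) =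
      1 - (h θ - g θ) ^ (Fintype.card K - 1) := by
    calc _ = P.eval₂ g (h θ) := by simp only [Polynomial.eval₂_def, Polynomial.sum_def, map_pow]
      _ = _ := by simp [P, Polynomial.eval₂_pow]
  rw [hsum]
  split_ifs with hgh
  · rw [hgh, sub_self, zero_pow hcard, sub_zero]
  · have hne : h θ - g θ ≠ 0 := sub_ne_zero.mpr fun e => hgh (hθ g h e.symm)
    rw [FiniteField.pow_card_sub_one_eq_one _ hne, sub_self]

end DualFamily

section BudaghyanHelleseth

/-- The Budaghyan–Helleseth multiplication attached to two endomorphisms `κ` and `τ`, to be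
thought of as the `q ^ ℓ`- and `q ^ d`-power maps. It has two components, along `1` and `ω`. -/
def bhProd {R : Type*} [Semiring R] (κ τ : R →+* R) (β ω x y : R) : R :=
  twistedProd κ x y + (β * twistedProd τ x y + κ (β * twistedProd τ x y)) * ω

variable {K : Type*} [Field K] {κ τ : K →+* K} {β ω : K}

/-- The assumptions on `κ` and `τ` under which the nuclei of `bhProd κ τ β ω` are computed: they
generate a commutative monoid in which `1`, `κ`, `τ`, `κ * τ` are pairwise distinct and
`κ * κ = 1`. -/
structure IsBHPair (κ τ : K →+* K) : Prop where
  mul_self : κ * κ = 1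
  comm : Commute κ τ
  left_ne_one : κ ≠ 1
  right_ne_one : τ ≠ 1
  mul_ne_one : κ * τ ≠ 1

namespace IsBHPair

lemma apply_apply (h : IsBHPair κ τ) (x : K) : κ (κ x) = x :=
  DFunLike.congr_fun h.mul_self x

lemma apply_comm (h : IsBHPair κ τ) (x : K) : κ (τ x) = τ (κ x) :=
  DFunLike.congr_fun h.comm.eq x

lemma left_ne_right (h : IsBHPair κ τ) : κ ≠ τ := fun e =>
  h.mul_ne_one (by rw [← e, h.mul_self])

lemma left_ne_mul (h : IsBHPair κ τ) : κ ≠ κ * τ := fun e =>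
  h.right_ne_one (RingHom.ext fun x => (κ.injective (DFunLike.congr_fun e x)).symm)

lemma right_ne_mul (h : IsBHPair κ τ) : τ ≠ κ * τ := fun e =>
  h.left_ne_one (RingHom.ext fun x => (τ.injective (DFunLike.congr_fun (e.trans h.comm.eq) x)).symm)

lemma injective (h : IsBHPair κ τ) : Injective ![1, κ, τ, κ * τ] := by
  rw [← List.nodup_ofFn]
  simp [h.left_ne_one.symm, h.right_ne_one.symm, h.mul_ne_one.symm, h.left_ne_right, h.left_ne_mul,
    h.right_ne_mul]

end IsBHPair

lemma eq_and_eq_of_add_mul_eq_add_mul (h2 : (2 : K) ≠ 0) (hω0 : ω ≠ 0) (hω : κ ω = -ω)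
    {a b a' b' : K} (ha : κ a = a) (hb : κ b = b) (ha' : κ a' = a') (hb' : κ b' = b')
    (h : a + b * ω = a' + b' * ω) : a = a' ∧ b = b' := by
  have hκ := congrArg κ h
  simp only [map_add, map_mul, ha, hb, ha', hb', hω] at hκ
  constructor
  · refine mul_left_cancel₀ h2 ?_
    linear_combination h + hκ
  · refine mul_left_cancel₀ (mul_ne_zero h2 hω0) ?_
    linear_combination h - hκ

lemma twistedProd_eq_and_eq_of_bhProd_eq (hκ : ∀ x, κ (κ x) = x) (h2 : (2 : K) ≠ 0) (hω0 : ω ≠ 0)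
    (hω : κ ω = -ω) {x y x' y' : K} (h : bhProd κ τ β ω x y = bhProd κ τ β ω x' y') :
    twistedProd κ x y = twistedProd κ x' y' ∧
      β * twistedProd τ x y + κ (β * twistedProd τ x y) =
        β * twistedProd τ x' y' + κ (β * twistedProd τ x' y') := by
  have htwisted : ∀ x y, κ (twistedProd κ x y) = twistedProd κ x y := fun x y => by
    simp only [twistedProd, map_add, map_mul, hκ]
    ring
  have htrace : ∀ z, κ (z + κ z) = z + κ z := fun z => by rw [map_add, hκ, add_comm]
  exact eq_and_eq_of_add_mul_eq_add_mul h2 hω0 hω (htwisted _ _) (htrace _) (htwisted _ _)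
    (htrace _) h

lemma exists_eq_and_eq_of_twistedProd_eq (hκ : ∀ x, κ (κ x) = x) (hκ1 : κ ≠ 1) {A B : K → K}
    (h : ∀ x y, twistedProd κ (A x) y = twistedProd κ x (B y)) :
    ∃ a b, (∀ x, A x = a * x + b * κ x) ∧ ∀ y, B y = κ a * y + b * κ y := by
  obtain ⟨b, a, hA⟩ := exists_eq_of_twistedProd_eq hκ1 h
  obtain ⟨b', a', hB⟩ := exists_eq_of_twistedProd_eq_right hκ1 h
  have hinj : Injective ![1, κ] := by
    rw [← List.nodup_ofFn]
    simp [hκ1.symm]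
  have hcoeff := coeff_eq_zero_of_sum_mul_monoidHom₂ hinj
    (c := ![![κ b - κ b', a - κ a'], ![κ a - a', b - b']]) (fun x y => by
      have := h x y
      simp only [twistedProd, hA, hB, map_add, map_mul, hκ] at this
      simp only [Fin.sum_univ_two, Matrix.cons_val, RingHom.coe_one, id_eq]
      linear_combination this)
  have ha : κ a = a' := sub_eq_zero.mp (hcoeff 1 0)
  have hb : b = b' := sub_eq_zero.mp (hcoeff 1 1)
  exact ⟨a, b, fun x => by rw [hA, add_comm], fun y => by rw [hB, ha, hb, add_comm]⟩

lemma exists_eq_of_mem_middleNucleus_bhProd (hs : IsBHPair κ τ) (h2 : (2 : K) ≠ 0) (hβ : β ≠ 0)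
    (hω0 : ω ≠ 0) (hω : κ ω = -ω) {A : K → K} (hA : A ∈ middleNucleus (bhProd κ τ β ω)) :
    ∃ a b, κ (τ a) = a ∧ κ β * κ (τ b) = β * b ∧ ∀ x, A x = a * x + b * κ x := by
  obtain ⟨B, hAB⟩ := hA
  have hparts := fun x y => twistedProd_eq_and_eq_of_bhProd_eq hs.apply_apply h2 hω0 hω (hAB x y)
  obtain ⟨a, b, hA, hB⟩ := exists_eq_and_eq_of_twistedProd_eq hs.apply_apply hs.left_ne_one
    fun x y => (hparts x y).1
  have hcoeff := coeff_eq_zero_of_sum_mul_monoidHom₂ hs.injective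
    (c := ![![0, 0, β * (a - κ (τ a)), κ β * κ b - β * τ b],
      ![0, 0, β * b - κ β * κ (τ b), κ β * (κ a - τ a)],
      ![β * (τ a - κ a), κ β * κ (τ b) - β * b, 0, 0],
      ![β * τ b - κ β * κ b, κ β * (κ (τ a) - a), 0, 0]]) (fun x y => by
      have := (hparts x y).2
      simp only [twistedProd, hA, hB, map_add, map_mul, hs.apply_apply, ← hs.apply_comm] at this
      simp only [Fin.sum_univ_four, Matrix.cons_val, RingHom.coe_one, id_eq, RingHom.coe_mul,
        comp_apply]
      linear_combination this)
  have ha : β * (a - κ (τ a)) = 0 := hcoeff 0 2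
  have hb : β * b - κ β * κ (τ b) = 0 := hcoeff 1 2
  exact ⟨a, b, (sub_eq_zero.mp ((mul_eq_zero.mp ha).resolve_left hβ)).symm,
    (sub_eq_zero.mp hb).symm, hA⟩

lemma mul_left_mem_middleNucleus_bhProd (hs : IsBHPair κ τ) {b : K}
    (hb : κ β * κ (τ b) = β * b) : (fun x => b * κ x) ∈ middleNucleus (bhProd κ τ β ω) := by
  have hb' : β * τ b = κ β * κ b := by simpa [hs.apply_apply] using congrArg κ hb
  refine ⟨fun y => b * κ y, fun x y => ?_⟩
  simp only [bhProd, twistedProd, map_add, map_mul, hs.apply_apply, ← hs.apply_comm]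
  linear_combination (κ (τ x) * y - x * κ (τ y)) * ω * hb' + (τ x * κ y - κ x * τ y) * ω * hb

lemma exists_ne_zero_mul_apply_eq {σ : K →+* K} {r : ℕ} (hr : σ ^ r = κ) (hβ : β ≠ 0) :
    ∃ b, b ≠ 0 ∧ κ β * σ b = β * b := by
  -- As `κ = σ ^ r`, the product `∏ i < r, σ ^ i β` is multiplied by `κ β / β` under `σ`.
  have hne : ∀ i, (σ ^ i) β ≠ 0 := fun i => (map_ne_zero _).mpr hβ
  have hprod : (∏ i ∈ Finset.range r, (σ ^ (i + 1)) β) * β =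
      (∏ i ∈ Finset.range r, (σ ^ i) β) * κ β := by
    rw [← hr, ← Finset.prod_range_succ, Finset.prod_range_succ', pow_zero, RingHom.one_def,
      RingHom.id_apply]
  refine ⟨(∏ i ∈ Finset.range r, (σ ^ i) β)⁻¹,
    inv_ne_zero (Finset.prod_ne_zero_iff.mpr fun i _ => hne i), ?_⟩
  have hσ : σ (∏ i ∈ Finset.range r, (σ ^ i) β) = ∏ i ∈ Finset.range r, (σ ^ (i + 1)) β := by
    simp only [map_prod, pow_succ', RingHom.mul_def, RingHom.comp_apply]
  have hne' := Finset.prod_ne_zero_iff.mpr fun i (_ : i ∈ Finset.range r) => hne i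
  have hne'' := Finset.prod_ne_zero_iff.mpr fun i (_ : i ∈ Finset.range r) => hne (i + 1)
  rw [map_inv₀, hσ]
  field_simp
  linear_combination -hprod

lemma encard_middleNucleus_bhProd_le (hs : IsBHPair κ τ) (h2 : (2 : K) ≠ 0) (hβ : β ≠ 0)
    (hω0 : ω ≠ 0) (hω : κ ω = -ω) {b₀ : K} (hb₀ : b₀ ≠ 0) (hb : κ β * κ (τ b₀) = β * b₀) :
    (middleNucleus (bhProd κ τ β ω)).encard ≤ (fixedPoints (κ * τ)).encard ^ 2 := by
  have hsub : middleNucleus (bhProd κ τ β ω) ⊆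
      (fun u : K × K => fun x => u.1 * x + u.2 * b₀ * κ x) ''
        (fixedPoints (κ * τ) ×ˢ fixedPoints (κ * τ)) := by
    intro A hA
    obtain ⟨a, b, ha, hb', hA⟩ := exists_eq_of_mem_middleNucleus_bhProd hs h2 hβ hω0 hω hA
    have hquot : κ (τ (b / b₀)) = b / b₀ := by
      have hκb₀ : κ (τ b₀) ≠ 0 := (map_ne_zero κ).mpr ((map_ne_zero τ).mpr hb₀)
      rw [map_div₀, map_div₀, div_eq_div_iff hκb₀ hb₀]
      refine mul_left_cancel₀ (mul_ne_zero hβ ((map_ne_zero κ).mpr hβ)) ?_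
      linear_combination β * b₀ * hb' - β * b * hb
    exact ⟨(a, b / b₀), ⟨ha, hquot⟩, funext fun x => by simp only [hA, div_mul_cancel₀ _ hb₀]⟩
  calc _ ≤ _ := Set.encard_le_encard hsub
    _ ≤ (fixedPoints (κ * τ) ×ˢ fixedPoints (κ * τ)).encard := Set.encard_image_le _ _
    _ = _ := by rw [Set.encard_prod, sq]

open Classical in
lemma sum_twistedProd_mul_apply {ι : Type*} {s : Finset ι} {u v : ι → K}
    (huv : ∀ g h : K →+* K, ∑ i ∈ s, g (u i) * h (v i) = if g = h then 1 else 0)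
    (α f : K →+* K) (c : K) :
    ∑ i ∈ s, twistedProd α (c * f (u i)) (v i) =
      (if α * f = 1 then α c else 0) + if f = α then c else 0 := by
  have h₁ := huv (α * f) 1
  have h₂ := huv f α
  simp only [RingHom.mul_def, RingHom.one_def, RingHom.comp_apply, RingHom.id_apply] at h₁
  simp only [twistedProd, map_mul, mul_assoc, Finset.sum_add_distrib, ← Finset.mul_sum, h₁, h₂,
    mul_ite, mul_one, mul_zero]
  rfl

lemma sum_bhProd {ι : Type*} (s : Finset ι) (u v : ι → K) :
    ∑ i ∈ s, bhProd κ τ β ω (u i) (v i) = ∑ i ∈ s, twistedProd κ (u i) (v i) +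
      (β * ∑ i ∈ s, twistedProd τ (u i) (v i) +
        κ (β * ∑ i ∈ s, twistedProd τ (u i) (v i))) * ω := by
  simp only [bhProd, Finset.sum_add_distrib, ← Finset.sum_mul, Finset.mul_sum, map_sum]

lemma mul_left_notMem_leftNucleus_bhProd [Finite K] (hs : IsBHPair κ τ) (h2 : (2 : K) ≠ 0) {b : K}
    (hb : b ≠ 0) : (fun x => b * κ x) ∉ leftNucleus (bhProd κ τ β ω) := by
  classical
  rintro ⟨C, hC⟩
  obtain ⟨s, u, v, huv⟩ := exists_sum_ringHom_mul_ringHom_eq_ite (K := K)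
  set t := κ b⁻¹ with ht
  have hbt : b * κ t = 1 := by rw [ht, hs.apply_apply, mul_inv_cancel₀ hb]
  -- `∑ (t * u i) ⊗ v i` is killed by the product, while its image under `A ⊗ 1` is not.
  have hzero : ∑ i ∈ s, bhProd κ τ β ω (t * u i) (v i) = 0 := by
    have hκ := sum_twistedProd_mul_apply huv κ 1 t
    have hτ := sum_twistedProd_mul_apply huv τ 1 t
    simp only [mul_one, hs.left_ne_one, hs.left_ne_one.symm, hs.right_ne_one, hs.right_ne_one.symm,
      if_false, add_zero] at hκ hτ
    change ∑ i ∈ s, twistedProd κ (t * u i) (v i) = 0 at hκ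
    change ∑ i ∈ s, twistedProd τ (t * u i) (v i) = 0 at hτ
    rw [sum_bhProd, hκ, hτ, mul_zero, map_zero, add_zero, zero_mul, add_zero]
  have htwo : ∑ i ∈ s, bhProd κ τ β ω (b * κ (t * u i)) (v i) = 2 := by
    have hκ := sum_twistedProd_mul_apply huv κ κ 1
    have hτ := sum_twistedProd_mul_apply huv τ κ 1
    have hτκ : τ * κ ≠ 1 := hs.comm.eq ▸ hs.mul_ne_one
    simp only [hs.mul_self, hτκ, hs.left_ne_right, if_true, if_false, map_one, add_zero,
      one_add_one_eq_two] at hκ hτ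
    simp only [map_mul, ← mul_assoc, hbt]
    rw [sum_bhProd, hκ, hτ, mul_zero, map_zero, add_zero, zero_mul, add_zero]
  simp only [hC] at htwo
  rw [← map_sum, hzero, map_zero] at htwo
  exact h2 htwo.symm

theorem not_isotopic_bhProd_dicksonProd (hs : IsBHPair κ τ) (h2 : (2 : K) ≠ 0) (hβ : β ≠ 0)
    (hω0 : ω ≠ 0) (hω : κ ω = -ω) (hb : ∃ b, b ≠ 0 ∧ κ β * κ (τ b) = β * b)
    (hcard : (fixedPoints (κ * τ)).encard ^ 4 < ENat.card K) {F : Type*} [CommSemiring F] (j : F)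
    (σ : F →* F) : ¬ Isotopic (bhProd κ τ β ω) (dicksonProd j σ) := by
  intro h
  obtain ⟨b, hb0, hb⟩ := hb
  have hF : ENat.card F ≤ (fixedPoints (κ * τ)).encard ^ 2 :=
    (card_le_encard_middleNucleus_dicksonProd j σ).trans
      (h.symm.encard_middleNucleus_le.trans
        (encard_middleNucleus_bhProd_le hs h2 hβ hω0 hω hb0 hb))
  obtain ⟨g, -⟩ := h
  refine hcard.not_ge ?_
  calc ENat.card K = ENat.card F ^ 2 := by rw [ENat.card_congr g.toEquiv, ENat.card_prod, sq]
    _ ≤ ((fixedPoints (κ * τ)).encard ^ 2) ^ 2 := by gcongr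
    _ = (fixedPoints (κ * τ)).encard ^ 4 := by rw [← pow_mul]

theorem not_isotopic_bhProd_twistedProd [Finite K] (hs : IsBHPair κ τ) (h2 : (2 : K) ≠ 0)
    (hb : ∃ b, b ≠ 0 ∧ κ β * κ (τ b) = β * b) {F : Type*} [Field F] {α : F →+* F} (hα : α ≠ 1)
    (hfix : ∀ x, α (α x) = x → α x = x) : ¬ Isotopic (bhProd κ τ β ω) (twistedProd α) := by
  intro h
  obtain ⟨b, hb0, hb⟩ := hb
  exact mul_left_notMem_leftNucleus_bhProd hs h2 hb0
    (h.middleNucleus_subset_leftNucleus (middleNucleus_twistedProd_subset_leftNucleus hα hfix)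
      (mul_left_mem_middleNucleus_bhProd hs hb))

end BudaghyanHelleseth

section Frobenius

variable {K : Type*} [Field K]

lemma encard_setOf_pow_eq_le {Q : ℕ} (hQ : 1 < Q) : {x : K | x ^ Q = x}.encard ≤ Q := by
  classical
  have hne := FiniteField.X_pow_card_sub_X_ne_zero K hQ
  calc {x : K | x ^ Q = x}.encard
      ≤ ((Polynomial.X ^ Q - Polynomial.X : Polynomial K).roots.toFinset : Set K).encard := by
        refine Set.encard_le_encard fun x hx => ?_
        simpa [hne, sub_eq_zero] using hx
    _ ≤ Q := by
        rw [Set.encard_coe_eq_coe_finsetCard, Nat.cast_le]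
        exact (Multiset.toFinset_card_le _).trans ((Polynomial.card_roots' _).trans
          (FiniteField.X_pow_card_sub_X_natDegree_eq K hQ).le)

lemma apply_eq_of_apply_apply_eq {α : K →+* K} {r : ℕ} (hα : α ^ r = 1) (hr : Odd r) {x : K}
    (hx : α (α x) = x) : α x = x := by
  have hperiod : IsPeriodicPt α r x := by
    rw [IsPeriodicPt, ← RingHom.coe_pow, hα]
    rfl
  have := IsPeriodicPt.gcd (m := 2) hx hperiod
  rwa [Nat.coprime_two_left.mpr hr] at this

variable {p : ℕ} [CharP K p]

lemma two_ne_zero_of_odd_charP (hp : Odd p) : (2 : K) ≠ 0 := by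
  refine Ring.two_ne_zero fun h => ?_
  rw [ringChar.eq K p] at h
  exact absurd hp (h ▸ by decide)

variable [Fact p.Prime] {e n m : ℕ}

lemma iterateFrobenius_pow_apply (i : ℕ) (x : K) :
    (iterateFrobenius K p e ^ i) x = x ^ (p ^ e) ^ i := by
  rw [RingHom.coe_pow, ← iterateFrobenius_mul_apply, iterateFrobenius_def, pow_mul]

variable [Finite K]

lemma iterateFrobenius_pow_card (hK : Nat.card K = (p ^ e) ^ n) :
    iterateFrobenius K p e ^ n = 1 := by
  have := Fintype.ofFinite K
  refine RingHom.ext fun x => ?_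
  rw [iterateFrobenius_pow_apply, ← hK, Nat.card_eq_fintype_card]
  exact FiniteField.pow_card x

lemma encard_fixedPoints_iterateFrobenius_pow_le (he : 0 < e) (hn : 0 < n)
    (hK : Nat.card K = (p ^ e) ^ n) (m : ℕ) :
    (fixedPoints (iterateFrobenius K p e ^ m)).encard ≤ ((p ^ e) ^ m.gcd n : ℕ) := by
  have hp := (Fact.out : p.Prime).one_lt
  refine le_trans (Set.encard_le_encard fun x hx => ?_) (encard_setOf_pow_eq_le
    (Nat.one_lt_pow (Nat.gcd_pos_of_pos_right m hn).ne' (Nat.one_lt_pow he.ne' hp)))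
  have hm : IsPeriodicPt (iterateFrobenius K p e) m x := by
    rwa [IsPeriodicPt, ← RingHom.coe_pow]
  have hn : IsPeriodicPt (iterateFrobenius K p e) n x := by
    rw [IsPeriodicPt, ← RingHom.coe_pow, iterateFrobenius_pow_card hK]
    rfl
  have hgcd := hm.gcd hn
  rwa [IsPeriodicPt, ← RingHom.coe_pow, IsFixedPt, iterateFrobenius_pow_apply] at hgcd

lemma iterateFrobenius_pow_ne_one (he : 0 < e) (hn : 0 < n) (hK : Nat.card K = (p ^ e) ^ n)
    (hm : ¬ n ∣ m) : iterateFrobenius K p e ^ m ≠ 1 := by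
  intro h
  have hle := encard_fixedPoints_iterateFrobenius_pow_le he hn hK m
  have huniv : fixedPoints (iterateFrobenius K p e ^ m) = Set.univ := by
    rw [h]
    exact Set.eq_univ_of_forall fun x => rfl
  rw [huniv, Set.encard_univ, ENat.card_eq_coe_natCard, hK, Nat.cast_le,
    Nat.pow_le_pow_iff_right (Nat.one_lt_pow he.ne' (Fact.out : p.Prime).one_lt)] at hle
  exact hm (Nat.gcd_eq_right_iff_dvd.mp (hle.antisymm' (Nat.gcd_le_right m hn)))

variable {ℓ d : ℕ}

lemma isBHPair_iterateFrobenius (he : 0 < e) (hℓ : 0 < ℓ) (hK : Nat.card K = (p ^ e) ^ (2 * ℓ))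
    (hd : ¬ 2 * ℓ ∣ d) (hodd : Odd (ℓ + d)) :
    IsBHPair (iterateFrobenius K p e ^ ℓ) (iterateFrobenius K p e ^ d) where
  mul_self := by rw [← pow_add, ← two_mul, iterateFrobenius_pow_card hK]
  comm := Commute.pow_pow_self _ _ _
  left_ne_one := iterateFrobenius_pow_ne_one he (by omega) hK
    (Nat.not_dvd_of_pos_of_lt hℓ (by omega))
  right_ne_one := iterateFrobenius_pow_ne_one he (by omega) hK hd
  mul_ne_one := by
    rw [← pow_add]
    exact iterateFrobenius_pow_ne_one he (by omega) hK fun h =>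
      hodd.not_two_dvd_nat ((Nat.dvd_mul_right 2 ℓ).trans h)

lemma exists_ne_zero_iterateFrobenius_mul_eq (hK : Nat.card K = (p ^ e) ^ (2 * ℓ))
    (hodd : Odd (ℓ + d)) {β : K} (hβ : β ≠ 0) :
    ∃ b, b ≠ 0 ∧ (iterateFrobenius K p e ^ ℓ) β *
      (iterateFrobenius K p e ^ ℓ) ((iterateFrobenius K p e ^ d) b) = β * b := by
  refine exists_ne_zero_mul_apply_eq (r := ℓ)
    (σ := iterateFrobenius K p e ^ ℓ * iterateFrobenius K p e ^ d) ?_ hβ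
  obtain ⟨m, hm⟩ := hodd
  calc (iterateFrobenius K p e ^ ℓ * iterateFrobenius K p e ^ d) ^ ℓ
      = (iterateFrobenius K p e ^ (2 * ℓ)) ^ m * iterateFrobenius K p e ^ ℓ := by
        rw [← pow_add, hm, ← pow_mul, ← pow_mul, ← pow_add]
        ring_nf
    _ = iterateFrobenius K p e ^ ℓ := by rw [iterateFrobenius_pow_card hK, one_pow, one_mul]

lemma encard_fixedPoints_pow_four_lt (he : 0 < e) (hK : Nat.card K = (p ^ e) ^ (2 * ℓ))
    (hodd : Odd (ℓ + d)) (hgcd : 2 * ℓ.gcd d < ℓ) :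
    (fixedPoints (iterateFrobenius K p e ^ ℓ * iterateFrobenius K p e ^ d)).encard ^ 4 <
      ENat.card K := by
  have hgcd' : (ℓ + d).gcd (2 * ℓ) = ℓ.gcd d := by
    rw [Nat.Coprime.gcd_mul_left_cancel_right _ (Nat.coprime_two_left.mpr hodd),
      Nat.gcd_self_add_left, Nat.gcd_comm]
  calc _ ≤ (((p ^ e) ^ ℓ.gcd d : ℕ) : ℕ∞) ^ 4 := by
        rw [← pow_add, ← hgcd']
        gcongr
        exact encard_fixedPoints_iterateFrobenius_pow_le he (by omega) hK _
    _ < _ := by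
        rw [ENat.card_eq_coe_natCard, hK, ← Nat.cast_pow, Nat.cast_lt, ← pow_mul,
          Nat.pow_lt_pow_iff_right (Nat.one_lt_pow he.ne' (Fact.out : p.Prime).one_lt)]
        omega

lemma iterateFrobenius_pow_apply_eq_of_apply_apply_eq (hK : Nat.card K = (p ^ e) ^ n)
    (hodd : Odd (n / n.gcd m)) {x : K}
    (hx : (iterateFrobenius K p e ^ m) ((iterateFrobenius K p e ^ m) x) = x) :
    (iterateFrobenius K p e ^ m) x = x := by
  refine apply_eq_of_apply_apply_eq (r := n / n.gcd m) ?_ hodd hx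
  rw [← pow_mul, ← Nat.mul_div_assoc _ (Nat.gcd_dvd_left n m), mul_comm,
    Nat.mul_div_assoc _ (Nat.gcd_dvd_right n m), pow_mul, iterateFrobenius_pow_card hK, one_pow]

end Frobenius

lemma bhMul_eq_bhProd (p e ℓ d : ℕ) [Fact p.Prime] (β ω : GaloisField p (e * (2 * ℓ))) :
    bhMul p e ℓ d (p ^ e) β ω =
      bhProd (iterateFrobenius _ p e ^ ℓ) (iterateFrobenius _ p e ^ d) β ω := by
  funext x y
  simp only [bhMul, bhProd, twistedProd, map_mul, iterateFrobenius_pow_apply]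
  ring

lemma twistedMul_eq_twistedProd {p e t : ℕ} [Fact p.Prime] (n : ℕ) :
    twistedMul n = twistedProd (iterateFrobenius (GaloisField p (e * t)) p e ^ n) := by
  funext x y
  simp only [twistedMul, twistedProd, iterateFrobenius_pow_apply]

lemma natCard_galoisField_mul {p e n : ℕ} [Fact p.Prime] (he : 0 < e) (hn : 0 < n) :
    Nat.card (GaloisField p (e * n)) = (p ^ e) ^ n := by
  rw [GaloisField.card p _ (by positivity), pow_mul]

theorem statement19_general (p e ℓ d : ℕ) [Fact p.Prime] (hp : Odd p) (he : 0 < e) (hℓ : 0 < ℓ)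
    (hd : ¬ 2 * ℓ ∣ d) (hodd : Odd (ℓ + d)) (β ω : GaloisField p (e * (2 * ℓ))) (hβ : β ≠ 0) :
    (2 * ℓ.gcd d < ℓ → ω ≠ 0 → ω ^ (p ^ e) ^ ℓ = -ω →
      ∀ {F : Type*} [CommSemiring F] (j : F) (σ : F →* F),
        ¬ Isotopic (bhMul p e ℓ d (p ^ e) β ω) (dicksonProd j σ)) ∧
    (∀ {F : Type*} [Field F] (α : F →+* F), α ≠ 1 → (∀ x, α (α x) = x → α x = x) →
      ¬ Isotopic (bhMul p e ℓ d (p ^ e) β ω) (twistedProd α)) := by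
  have hK := natCard_galoisField_mul (p := p) he (n := 2 * ℓ) (by omega)
  have hs := isBHPair_iterateFrobenius he hℓ hK hd hodd
  have h2 := two_ne_zero_of_odd_charP (K := GaloisField p (e * (2 * ℓ))) hp
  have hb := exists_ne_zero_iterateFrobenius_mul_eq hK hodd hβ
  rw [bhMul_eq_bhProd]
  refine ⟨fun hgcd hω0 hω F _ j σ => ?_, fun α hα hfix => ?_⟩
  · exact not_isotopic_bhProd_dicksonProd hs h2 hβ hω0
      ((iterateFrobenius_pow_apply ℓ ω).trans hω) hb
      (encard_fixedPoints_pow_four_lt he hK hodd hgcd) j σ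
  · exact not_isotopic_bhProd_twistedProd hs h2 hb hα hfix

theorem statement19 (p e ℓ d q : ℕ) [Fact p.Prime] (hp : Odd p) (he : 0 < e)
    (hq : q = p ^ e) (hℓ : 2 < ℓ) (hd0 : 0 < d) (hd2 : d < 2 * ℓ)
    (hgcd : Nat.gcd ℓ d = 1) (hodd : Odd (ℓ + d))
    (β ω : GaloisField p (e * (2 * ℓ)))
    (hβ : ¬ ∃ c : GaloisField p (e * (2 * ℓ)), c ^ 2 = β)
    (hω0 : ω ≠ 0) (hω : ω ^ q ^ ℓ = -ω) :
    -- (a) no isotopism between the BH presemifield and any Dickson semifield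
    -- of the same order
    (∀ (p2 e2 k : ℕ) [Fact p2.Prime], Odd p2 → 0 < e2 → 1 < k → Odd k →
      ∀ (j : GaloisField p2 (e2 * k)),
        (¬ ∃ c : GaloisField p2 (e2 * k), c ^ 2 = j) →
      ∀ (σ : GaloisField p2 (e2 * k) ≃+* GaloisField p2 (e2 * k)),
        (∀ x : GaloisField p2 (e2 * k), x ^ p2 ^ e2 = x → σ x = x) →
        σ ≠ RingEquiv.refl (GaloisField p2 (e2 * k)) →
        (p2 ^ e2) ^ (2 * k) = q ^ (2 * ℓ) →
        ¬ ∃ g1 g2 g3 : GaloisField p (e * (2 * ℓ)) ≃+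
              (GaloisField p2 (e2 * k) × GaloisField p2 (e2 * k)),
            ∀ x y : GaloisField p (e * (2 * ℓ)),
              dicksonMul j σ (g1 x) (g2 y) = g3 (bhMul p e ℓ d q β ω x y)) ∧
    -- (b) no isotopism between the BH presemifield and any generalized twisted
    -- field of the same order
    (∀ (p2 e2 t n' : ℕ) [Fact p2.Prime], Odd p2 → 0 < e2 → 1 < t →
      -- the fixed field of `α : x ↦ x^{Q^{n'}}` is `F_Q`
      (∀ x : GaloisField p2 (e2 * t), x ^ (p2 ^ e2) ^ n' = x ↔ x ^ p2 ^ e2 = x) →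
      -- `α ≠ id`
      (∃ x : GaloisField p2 (e2 * t), x ^ (p2 ^ e2) ^ n' ≠ x) →
      Odd (t / Nat.gcd t n') →
      (p2 ^ e2) ^ t = q ^ (2 * ℓ) →
      ¬ ∃ g1 g2 g3 : GaloisField p (e * (2 * ℓ)) ≃+ GaloisField p2 (e2 * t),
          ∀ x y : GaloisField p (e * (2 * ℓ)),
            twistedMul n' (g1 x) (g2 y) = g3 (bhMul p e ℓ d q β ω x y)) := by
  subst hq
  obtain ⟨hdickson, htwisted⟩ := statement19_general p e ℓ d hp he (by omega)
    (Nat.not_dvd_of_pos_of_lt hd0 hd2) hodd β ω fun h => hβ ⟨0, by simp [h]⟩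
  refine ⟨fun p2 e2 k _ _ _ _ _ j _ σ _ _ _ => hdickson (by omega) hω0 hω j
    (σ : GaloisField p2 (e2 * k) →* GaloisField p2 (e2 * k)),
    fun p2 e2 t n' _ _ he2 ht _ hne hn' _ => ?_⟩
  rw [twistedMul_eq_twistedProd]
  exact htwisted _ (DFunLike.ne_iff.mpr (by simpa [iterateFrobenius_pow_apply] using hne))
    fun x => iterateFrobenius_pow_apply_eq_of_apply_apply_eq
      (natCard_galoisField_mul he2 (by omega)) hn'
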